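/- Graham–Grimmett influence inequality for monotonic measures: There exists a universal constant c > 0 such that for every n ∈ ℕ, every monotonic probability measure μ on {0,1}^n with min_{1≤i≤n} Var_μ(ω_i) > 0, and every increasing boolean function f : {0,1}^n → {0,1}, one has Var_μ(f) ≤ (c / min_{1≤i≤n} Var_μ(ω_i)) · Σ_{i=1}^n Inf_i^μ[f] / log(1/Inf_i^μ[f]), where a summand with Inf_i^μ[f] = 0 is interpreted as 0 and a summand with Inf_i^μ[f] = 1 as +∞. -/

import Mathlib

open scoped Classical

section MonotonicMeasures

variable {ι : Type*} [Fintype ι] [DecidableEq ι]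

/-- A probability measure `μ` on the finite set `{0,1}^ι`, given by its weight function
`w`: all weights are nonnegative and they sum to `1`. -/
def IsProbWeight (w : (ι → Bool) → ℝ) : Prop :=
  (∀ ω, 0 ≤ w ω) ∧ ∑ ω : ι → Bool, w ω = 1

/-- The probability `μ[A]` of an event `A ⊆ {0,1}^ι` under the measure with weights `w`. -/
noncomputable def wProb (w : (ι → Bool) → ℝ) (A : (ι → Bool) → Prop) : ℝ :=
  ∑ ω : ι → Bool, w ω * (if A ω then 1 else 0)

/-- The expectation `μ[g]` of `g : {0,1}^ι → ℝ` under the measure with weights `w`. -/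
noncomputable def wExp (w : (ι → Bool) → ℝ) (g : (ι → Bool) → ℝ) : ℝ :=
  ∑ ω : ι → Bool, w ω * g ω

/-- The variance `Var_μ(g)` of `g : {0,1}^ι → ℝ` under the measure with weights `w`. -/
noncomputable def wVar (w : (ι → Bool) → ℝ) (g : (ι → Bool) → ℝ) : ℝ :=
  wExp w (fun ω => (g ω - wExp w g) ^ 2)

/-- The `{0,1}`-valued (real) indicator of a boolean function. -/
noncomputable def boolInd (f : (ι → Bool) → Bool) (ω : ι → Bool) : ℝ :=
  if f ω then 1 else 0

/-- The real-valued coordinate function `ω ↦ ω_i`. -/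
noncomputable def coordFun (i : ι) (ω : ι → Bool) : ℝ := if ω i then 1 else 0

/-- The cylinder event `{ω : ω_i = ξ_i for all i ∈ F}`. -/
def agreesOn (F : Finset ι) (ξ : ι → Bool) (ω : ι → Bool) : Prop :=
  ∀ i ∈ F, ω i = ξ i

/-- A measure `μ` (with weights `w`) on `{0,1}^ι` is monotonic if, for every coordinate
`e`, every `F ⊆ ι` and all `ξ ≤ ζ` in `{0,1}^F` whose cylinders have positive
probability, `μ[ω_e = 1 | ω ≡ ξ on F] ≤ μ[ω_e = 1 | ω ≡ ζ on F]`. -/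
def IsMonotonic (w : (ι → Bool) → ℝ) : Prop :=
  ∀ (e : ι) (F : Finset ι) (ξ ζ : ι → Bool), (∀ i ∈ F, ξ i ≤ ζ i) →
    0 < wProb w (agreesOn F ξ) → 0 < wProb w (agreesOn F ζ) →
    wProb w (fun ω => ω e = true ∧ agreesOn F ξ ω) / wProb w (agreesOn F ξ) ≤
      wProb w (fun ω => ω e = true ∧ agreesOn F ζ ω) / wProb w (agreesOn F ζ)

/-- The conditional influence `Inf_i^μ(f) := μ[f | ω_i = 1] − μ[f | ω_i = 0]`. -/
noncomputable def condInfluence (w : (ι → Bool) → ℝ) (f : (ι → Bool) → Bool) (i : ι) : ℝ :=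
  wProb w (fun ω => f ω = true ∧ ω i = true) / wProb w (fun ω => ω i = true) -
    wProb w (fun ω => f ω = true ∧ ω i = false) / wProb w (fun ω => ω i = false)

/-- A boolean function is increasing if it is monotone w.r.t. the coordinatewise
partial order on `{0,1}^ι` (with `false ≤ true`). -/
def IncreasingBoolFun (f : (ι → Bool) → Bool) : Prop :=
  ∀ ω ω' : ι → Bool, (∀ i, ω i ≤ ω' i) → f ω ≤ f ω'

end MonotonicMeasures

/-!
Order the coordinates and sample `μ` one coordinate at a time, the `i`-th from an independent
uniform seed of `m` bits by comparing the binary number it spells with the conditional probability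
of `ω_i = 1` given the past. Up to rounding, `f` becomes a Boolean function on a uniform cube, to
which Talagrand's argument applies: the low Walsh levels of each discrete derivative are small by
Bonami's fourth moment inequality, and the high levels are shared among many coordinates.

Bit `j` of the seed of `i` changes `ω_i` with probability at most `2 ^ (j + 1) / 2 ^ m`,
independently of how strongly forcing `ω_i` affects `f`. These probabilities sum to at most `2`
over `j`, so the bits of one seed together contribute at most twice what a single bit with the full
effect of `ω_i` would. By monotonicity, sampling with `ω_i` forced to be `1` is dominated by
`μ[· | ω_i = 1]`, and dually for `0`, so the effect of forcing `ω_i` is at most `Inf_i(f)`. Then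
`m → ∞` removes the rounding.
-/

open scoped BigOperators

/-! ### Uniform averages over product spaces -/

section UniformAverage

variable {ι A : Type*} [Fintype ι] [DecidableEq ι] [Fintype A]

theorem expect_prod_apply {K : Type*} [Semifield K] [CharZero K] (f : ι → A → K) :
    𝔼 u : ι → A, ∏ i, f i (u i) = ∏ i, 𝔼 a, f i a := by
  simp only [Fintype.expect_eq_sum_div_card, Finset.prod_div_distrib, Finset.prod_univ_sum,
    Fintype.piFinset_univ, Finset.prod_const, Finset.card_univ, Fintype.card_fun, Nat.cast_pow]

theorem expect_expect_update {M : Type*} [AddCommMonoid M] [Module ℚ≥0 M] [Nonempty A]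
    (G : (ι → A) → M) (i : ι) :
    𝔼 u, 𝔼 a, G (Function.update u i a) = 𝔼 u, G u := by
  let swap : (ι → A) × A → (ι → A) × A := fun p => (Function.update p.1 i p.2, p.1 i)
  have swap_swap : Function.Involutive swap := fun p => by simp [swap]
  calc 𝔼 u, 𝔼 a, G (Function.update u i a)
      = 𝔼 p : (ι → A) × A, G (swap p).1 := by
        rw [← Finset.univ_product_univ, Finset.expect_product]
    _ = 𝔼 p : (ι → A) × A, G p.1 :=
        Fintype.expect_equiv swap_swap.toPerm _ _ fun _ => rfl
    _ = 𝔼 u, G u := by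
        rw [← Finset.univ_product_univ, Finset.expect_product]
        simp only [Fintype.expect_const]

end UniformAverage

/-! ### Walsh analysis on the uniform cube -/

section Walsh

variable {E : Type*}

/-- The sign `(-1)^b` of a bit `b`. -/
noncomputable def boolSign (b : Bool) : ℝ := if b then -1 else 1

theorem boolSign_not (b : Bool) : boolSign (!b) = -boolSign b := by cases b <;> simp [boolSign]

theorem boolSign_mul_self (b : Bool) : boolSign b * boolSign b = 1 := by
  cases b <;> simp [boolSign]

theorem boolSign_mul_of_ne {a b : Bool} (h : a ≠ b) : boolSign a * boolSign b = -1 := by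
  cases a <;> cases b <;> simp_all [boolSign]

/-- The Walsh character of the uniform cube indexed by `S`. -/
noncomputable def walsh (S : Finset E) (x : E → Bool) : ℝ := ∏ e ∈ S, boolSign (x e)

variable [DecidableEq E]

/-- The point of the cube obtained from `x` by flipping the bit `e`. -/
def flipBit (e : E) (x : E → Bool) : E → Bool := Function.update x e (!x e)

theorem flipBit_self (e : E) (x : E → Bool) : flipBit e x e = !x e := Function.update_self ..

theorem flipBit_of_ne {e e' : E} (h : e' ≠ e) (x : E → Bool) : flipBit e x e' = x e' :=
  Function.update_of_ne h ..

theorem flipBit_involutive (e : E) : Function.Involutive (flipBit e) := fun x => by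
  simp [flipBit]

theorem curry_flipBit {B : Type*} [DecidableEq B] (e : E) (j : B) (x : E × B → Bool) :
    Function.curry (flipBit (e, j) x) =
      Function.update (Function.curry x) e (flipBit j (Function.curry x e)) := by
  funext e' j'
  by_cases he : e' = e <;> by_cases hj : j' = j <;> simp [flipBit, Function.curry, he, hj]

theorem walsh_flipBit_of_notMem {e : E} {S : Finset E} (h : e ∉ S) (x : E → Bool) :
    walsh S (flipBit e x) = walsh S x :=
  Finset.prod_congr rfl fun _ hj => by rw [flipBit_of_ne (ne_of_mem_of_not_mem hj h)]

theorem walsh_insert {e : E} {S : Finset E} (h : e ∉ S) (x : E → Bool) :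
    walsh (insert e S) x = boolSign (x e) * walsh S x :=
  Finset.prod_insert h

theorem walsh_flipBit_of_mem {e : E} {S : Finset E} (h : e ∈ S) (x : E → Bool) :
    walsh S (flipBit e x) = -walsh S x := by
  rw [← Finset.insert_erase h, walsh_insert (S.notMem_erase e), walsh_insert (S.notMem_erase e),
    walsh_flipBit_of_notMem (S.notMem_erase e), flipBit_self, boolSign_not, neg_mul]

variable [Fintype E]

theorem expect_flipBit (e : E) (g : (E → Bool) → ℝ) : 𝔼 x, g (flipBit e x) = 𝔼 x, g x :=
  Fintype.expect_equiv (flipBit_involutive e).toPerm _ _ fun _ => rfl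

theorem expect_eq_zero_of_flipBit_eq_neg (e : E) {g : (E → Bool) → ℝ}
    (hg : ∀ x, g (flipBit e x) = -g x) : 𝔼 x, g x = 0 := by
  have h := expect_flipBit e g
  simp only [hg, Finset.expect_neg_distrib] at h
  linarith

theorem sum_walsh_mul_walsh (x y : E → Bool) :
    ∑ S, walsh S x * walsh S y = if x = y then (Fintype.card (E → Bool) : ℝ) else 0 := by
  have factor : ∑ S, walsh S x * walsh S y = ∏ e, (1 + boolSign (x e) * boolSign (y e)) := by
    simp only [Finset.prod_one_add, Finset.powerset_univ, walsh, Finset.prod_mul_distrib]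
  rw [factor]
  split_ifs with hxy
  · norm_num [hxy, boolSign_mul_self]
  · obtain ⟨e, he⟩ := Function.ne_iff.mp hxy
    exact Finset.prod_eq_zero (Finset.mem_univ e) (by rw [boolSign_mul_of_ne he]; ring)

/-- The Walsh–Fourier coefficient of `g` at `S`. -/
noncomputable def walshCoeff (g : (E → Bool) → ℝ) (S : Finset E) : ℝ := 𝔼 x, g x * walsh S x

theorem walshCoeff_empty (g : (E → Bool) → ℝ) : walshCoeff g ∅ = 𝔼 x, g x := by
  simp [walshCoeff, walsh]

theorem sum_walshCoeff_mul_walsh (g : (E → Bool) → ℝ) (x : E → Bool) :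
    ∑ S, walshCoeff g S * walsh S x = g x := by
  have hcard : (Fintype.card (E → Bool) : ℝ) ≠ 0 := by exact_mod_cast Fintype.card_ne_zero
  calc ∑ S, walshCoeff g S * walsh S x = 𝔼 y, g y * ∑ S, walsh S y * walsh S x := by
        simp only [walshCoeff, Finset.expect_mul, Finset.mul_sum, Finset.expect_sum_comm, mul_assoc]
    _ = g x := by
        rw [Fintype.expect_eq_sum_div_card]
        simp only [sum_walsh_mul_walsh, mul_ite, mul_zero, Finset.sum_ite_eq', Finset.mem_univ,
          if_true]
        field_simp

theorem expect_mul_sum_walsh (g : (E → Bool) → ℝ) (a : Finset E → ℝ) :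
    𝔼 x, g x * ∑ S, a S * walsh S x = ∑ S, a S * walshCoeff g S := by
  simp only [walshCoeff, Finset.mul_expect, Finset.mul_sum, Finset.expect_sum_comm,
    mul_left_comm]

theorem expect_sq_eq_sum_walshCoeff_sq (g : (E → Bool) → ℝ) :
    𝔼 x, g x ^ 2 = ∑ S, walshCoeff g S ^ 2 := by
  have h := expect_mul_sum_walsh g (walshCoeff g)
  simpa only [sum_walshCoeff_mul_walsh, ← sq] using h

theorem walshCoeff_sub_flipBit (g : (E → Bool) → ℝ) (e : E) (S : Finset E) :
    walshCoeff (fun x => g x - g (flipBit e x)) S = if e ∈ S then 2 * walshCoeff g S else 0 := by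
  have move_flip : 𝔼 x, g (flipBit e x) * walsh S x = 𝔼 x, g x * walsh S (flipBit e x) := by
    rw [← expect_flipBit e fun x => g x * walsh S (flipBit e x)]
    simp only [flipBit_involutive e _]
  simp only [walshCoeff, sub_mul, Finset.expect_sub_distrib, move_flip]
  split_ifs with he
  · simp only [walsh_flipBit_of_mem he, mul_neg, Finset.expect_neg_distrib]
    ring
  · simp only [walsh_flipBit_of_notMem he, sub_self]

end Walsh

/-! ### Hypercontractivity and Talagrand's inequality -/

section Talagrand

variable {E : Type*} [Fintype E] [DecidableEq E]

theorem expect_add_boolSign_mul_pow_four (e : E) {u v : (E → Bool) → ℝ}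
    (hu : ∀ x, u (flipBit e x) = u x) (hv : ∀ x, v (flipBit e x) = v x) :
    𝔼 x, (u x + boolSign (x e) * v x) ^ 4 =
      𝔼 x, u x ^ 4 + 6 * 𝔼 x, u x ^ 2 * v x ^ 2 + 𝔼 x, v x ^ 4 := by
  have odd_part : 𝔼 x, boolSign (x e) * (4 * u x ^ 3 * v x + 4 * u x * v x ^ 3) = 0 :=
    expect_eq_zero_of_flipBit_eq_neg e fun x => by
      rw [hu, hv, flipBit_self, boolSign_not, neg_mul]
  have expand : ∀ x, (u x + boolSign (x e) * v x) ^ 4 =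
      u x ^ 4 + 6 * (u x ^ 2 * v x ^ 2) + v x ^ 4 +
        boolSign (x e) * (4 * u x ^ 3 * v x + 4 * u x * v x ^ 3) := fun x => by
    have hs : boolSign (x e) ^ 2 = 1 := by rw [sq, boolSign_mul_self]
    linear_combination (6 * u x ^ 2 * v x ^ 2 + 4 * u x * boolSign (x e) * v x ^ 3 +
      (boolSign (x e) ^ 2 + 1) * v x ^ 4) * hs
  simp only [expand, Finset.expect_add_distrib, odd_part, add_zero, Finset.mul_expect]

theorem expect_sq_mul_sq_le {α : Type*} [Fintype α] {u v : α → ℝ} {A B : ℝ} (hA : 0 ≤ A)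
    (hB : 0 ≤ B) (hu : 𝔼 x, u x ^ 4 ≤ A ^ 2) (hv : 𝔼 x, v x ^ 4 ≤ B ^ 2) :
    𝔼 x, u x ^ 2 * v x ^ 2 ≤ A * B := by
  refine le_of_sq_le_sq ?_ (mul_nonneg hA hB)
  calc (𝔼 x, u x ^ 2 * v x ^ 2) ^ 2 ≤ (𝔼 x, (u x ^ 2) ^ 2) * 𝔼 x, (v x ^ 2) ^ 2 :=
        Finset.expect_mul_sq_le_sq_mul_sq ..
    _ = (𝔼 x, u x ^ 4) * 𝔼 x, v x ^ 4 := by simp only [← pow_mul]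
    _ ≤ A ^ 2 * B ^ 2 := by gcongr
    _ = (A * B) ^ 2 := by ring

theorem expect_sum_walsh_pow_four_le (V : Finset E) (a : Finset E → ℝ) :
    𝔼 x, (∑ S ∈ V.powerset, a S * walsh S x) ^ 4 ≤
      (∑ S ∈ V.powerset, 3 ^ S.card * a S ^ 2) ^ 2 := by
  induction V using Finset.induction_on generalizing a with
  | empty => simp [walsh, ← pow_mul]
  | insert e V he ih =>
    have notMem : ∀ S ∈ V.powerset, e ∉ S := fun S hS h => he (Finset.mem_powerset.mp hS h)
    let u (b : Finset E → ℝ) (x : E → Bool) : ℝ := ∑ S ∈ V.powerset, b S * walsh S x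
    let A (b : Finset E → ℝ) : ℝ := ∑ S ∈ V.powerset, 3 ^ S.card * b S ^ 2
    let a' : Finset E → ℝ := fun S => a (insert e S)
    have u_flip : ∀ b x, u b (flipBit e x) = u b x := fun b x =>
      Finset.sum_congr rfl fun S hS => by rw [walsh_flipBit_of_notMem (notMem S hS)]
    have A_nonneg : ∀ b, 0 ≤ A b := fun b => Finset.sum_nonneg fun S _ => by positivity
    have split_sum : ∀ x, ∑ S ∈ (insert e V).powerset, a S * walsh S x =
        u a x + boolSign (x e) * u a' x := fun x => by
      rw [Finset.sum_powerset_insert he, Finset.mul_sum]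
      congr 1
      refine Finset.sum_congr rfl fun S hS => ?_
      rw [walsh_insert (notMem S hS), mul_left_comm]
    have split_weight : ∑ S ∈ (insert e V).powerset, 3 ^ S.card * a S ^ 2 = A a + 3 * A a' := by
      rw [Finset.sum_powerset_insert he, Finset.mul_sum]
      congr 1
      refine Finset.sum_congr rfl fun S hS => ?_
      rw [Finset.card_insert_of_notMem (notMem S hS)]
      ring
    have cross := expect_sq_mul_sq_le (A_nonneg a) (A_nonneg a') (ih a) (ih a')
    calc 𝔼 x, (∑ S ∈ (insert e V).powerset, a S * walsh S x) ^ 4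
        = 𝔼 x, u a x ^ 4 + 6 * 𝔼 x, u a x ^ 2 * u a' x ^ 2 + 𝔼 x, u a' x ^ 4 := by
          simp only [split_sum]
          exact expect_add_boolSign_mul_pow_four e (u_flip a) (u_flip a')
      _ ≤ A a ^ 2 + 6 * (A a * A a') + A a' ^ 2 := by gcongr <;> exact ih _
      _ ≤ (A a + 3 * A a') ^ 2 := by nlinarith [sq_nonneg (A a')]
      _ = _ := by rw [split_weight]

theorem expect_mul_pow_four_le {α : Type*} [Fintype α] {d h : α → ℝ} (hd : ∀ x, d x ^ 3 = d x) :
    (𝔼 x, d x * h x) ^ 4 ≤ (𝔼 x, d x ^ 2) ^ 3 * 𝔼 x, h x ^ 4 := by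
  have d_pow_four : ∀ x, (d x ^ 2) ^ 2 = d x ^ 2 := fun x => by
    linear_combination d x * hd x
  have first : (𝔼 x, d x * h x) ^ 2 ≤ (𝔼 x, d x ^ 2) * 𝔼 x, d x ^ 2 * h x ^ 2 := by
    have cs := Finset.expect_mul_sq_le_sq_mul_sq .univ (fun x => d x ^ 2) fun x => d x * h x
    simpa only [← mul_assoc, ← pow_succ, Nat.reduceAdd, hd, d_pow_four, mul_pow] using cs
  have second : (𝔼 x, d x ^ 2 * h x ^ 2) ^ 2 ≤ (𝔼 x, d x ^ 2) * 𝔼 x, h x ^ 4 := by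
    have cs := Finset.expect_mul_sq_le_sq_mul_sq .univ (fun x => d x ^ 2) fun x => h x ^ 2
    simpa only [d_pow_four, ← pow_mul, Nat.reduceMul] using cs
  calc (𝔼 x, d x * h x) ^ 4 = ((𝔼 x, d x * h x) ^ 2) ^ 2 := by ring
    _ ≤ ((𝔼 x, d x ^ 2) * 𝔼 x, d x ^ 2 * h x ^ 2) ^ 2 := by gcongr
    _ = (𝔼 x, d x ^ 2) ^ 2 * (𝔼 x, d x ^ 2 * h x ^ 2) ^ 2 := mul_pow ..
    _ ≤ (𝔼 x, d x ^ 2) ^ 2 * ((𝔼 x, d x ^ 2) * 𝔼 x, h x ^ 4) := by gcongr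
    _ = (𝔼 x, d x ^ 2) ^ 3 * 𝔼 x, h x ^ 4 := by ring

theorem sum_walshCoeff_sq_card_le_le {d : (E → Bool) → ℝ} (hd : ∀ x, d x ^ 3 = d x) (k : ℕ) :
    ∑ S, (if S.card ≤ k then walshCoeff d S ^ 2 else 0) ≤ 3 ^ k * √(𝔼 x, d x ^ 2) ^ 3 := by
  set W := ∑ S, (if S.card ≤ k then walshCoeff d S ^ 2 else 0) with hW
  let a (S : Finset E) : ℝ := if S.card ≤ k then walshCoeff d S else 0
  have energy_nonneg : 0 ≤ 𝔼 x, d x ^ 2 := Finset.expect_nonneg fun _ _ => sq_nonneg _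
  have W_nonneg : 0 ≤ W := Finset.sum_nonneg fun S _ => by positivity
  have pairing : 𝔼 x, d x * ∑ S, a S * walsh S x = W := by
    rw [expect_mul_sum_walsh]
    refine Finset.sum_congr rfl fun S _ => ?_
    simp only [a, ite_mul, zero_mul, ← sq]
  have fourth_moment : 𝔼 x, (∑ S, a S * walsh S x) ^ 4 ≤ (3 ^ k * W) ^ 2 := by
    have bonami := expect_sum_walsh_pow_four_le .univ a
    rw [Finset.powerset_univ] at bonami
    refine bonami.trans (pow_le_pow_left₀ (Finset.sum_nonneg fun S _ => by positivity) ?_ 2)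
    rw [hW, Finset.mul_sum]
    refine Finset.sum_le_sum fun S _ => ?_
    by_cases hS : S.card ≤ k
    · simp only [a, hS, if_true]
      gcongr
      norm_num
    · simp [a, hS]
  have self_bound : W ^ 2 * W ^ 2 ≤ (3 ^ k * √(𝔼 x, d x ^ 2) ^ 3) ^ 2 * W ^ 2 := by
    have sqrt_sq := Real.sq_sqrt energy_nonneg
    calc W ^ 2 * W ^ 2 = (𝔼 x, d x * ∑ S, a S * walsh S x) ^ 4 := by rw [pairing]; ring
      _ ≤ (𝔼 x, d x ^ 2) ^ 3 * (3 ^ k * W) ^ 2 :=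
        (expect_mul_pow_four_le hd).trans (by gcongr)
      _ = (3 ^ k * √(𝔼 x, d x ^ 2) ^ 3) ^ 2 * W ^ 2 := by
        nth_rw 1 [← sqrt_sq]
        ring
  rcases W_nonneg.eq_or_lt with W_zero | W_pos
  · rw [← W_zero]
    positivity
  · exact le_of_sq_le_sq (le_of_mul_le_mul_right self_bound (by positivity)) (by positivity)

/-- The influence of the bit `e` on `g`, in mean square. -/
noncomputable def cubeInfluence (g : (E → Bool) → ℝ) (e : E) : ℝ :=
  𝔼 x, (g x - g (flipBit e x)) ^ 2

/-- The contribution to Talagrand's inequality of a coordinate with influence `x`: Walsh levels up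
to `k` are bounded by hypercontractivity, and each higher level is shared by more than `k`
coordinates. Optimizing over `k` gives the order of `x / log (1 / x)`. -/
noncomputable def talagrandTerm (k : ℕ) (x : ℝ) : ℝ := 3 ^ k * √x ^ 3 + x / (k + 1)

theorem talagrandTerm_monotone (k : ℕ) : Monotone (talagrandTerm k) := fun x y hxy => by
  unfold talagrandTerm
  gcongr

theorem talagrandTerm_nonneg (k : ℕ) {x : ℝ} (hx : 0 ≤ x) : 0 ≤ talagrandTerm k x := by
  unfold talagrandTerm
  positivity

theorem continuous_talagrandTerm (k : ℕ) : Continuous (talagrandTerm k) := by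
  unfold talagrandTerm
  fun_prop

theorem talagrandTerm_mul_le (k : ℕ) {δ : ℝ} (hδ : 0 ≤ δ) (hδ_one : δ ≤ 1) (x : ℝ) :
    talagrandTerm k (δ * x) ≤ δ * talagrandTerm k x := by
  have sqrt_pow_le : √δ ^ 3 ≤ δ := by
    calc √δ ^ 3 = δ * √δ := by rw [pow_succ, Real.sq_sqrt hδ]
      _ ≤ δ := mul_le_of_le_one_right hδ (Real.sqrt_le_one.mpr hδ_one)
  calc talagrandTerm k (δ * x) = √δ ^ 3 * (3 ^ k * √x ^ 3) + δ * (x / (k + 1)) := by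
        rw [talagrandTerm, Real.sqrt_mul hδ]
        ring
    _ ≤ δ * (3 ^ k * √x ^ 3) + δ * (x / (k + 1)) := by gcongr
    _ = δ * talagrandTerm k x := by rw [talagrandTerm, mul_add]

theorem expect_sq_sub_sq_expect_eq_sum (g : (E → Bool) → ℝ) :
    𝔼 x, g x ^ 2 - (𝔼 x, g x) ^ 2 =
      ∑ e, ∑ S, if e ∈ S then walshCoeff g S ^ 2 / S.card else 0 := by
  have share : ∀ S : Finset E, (∑ e, if e ∈ S then walshCoeff g S ^ 2 / S.card else 0) =
      if S = ∅ then 0 else walshCoeff g S ^ 2 := fun S => by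
    rcases S.eq_empty_or_nonempty with rfl | hS
    · simp
    · rw [if_neg hS.ne_empty, Finset.sum_ite_mem, Finset.univ_inter, Finset.sum_const, nsmul_eq_mul]
      have := hS.card_ne_zero
      field_simp
  rw [Finset.sum_comm, expect_sq_eq_sum_walshCoeff_sq, ← walshCoeff_empty, sub_eq_iff_eq_add]
  simp only [share]
  calc ∑ S, walshCoeff g S ^ 2
      = ∑ S, ((if S = ∅ then 0 else walshCoeff g S ^ 2) +
          if S = ∅ then walshCoeff g S ^ 2 else 0) :=
        Finset.sum_congr rfl fun S _ => by split_ifs <;> simp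
    _ = _ := by simp only [Finset.sum_add_distrib, Finset.sum_ite_eq', Finset.mem_univ, if_true]

theorem sum_walshCoeff_sq_div_card_le {g : (E → Bool) → ℝ} (hg : ∀ x, g x = 0 ∨ g x = 1) (e : E)
    (k : ℕ) :
    (∑ S, if e ∈ S then walshCoeff g S ^ 2 / S.card else 0) ≤
      talagrandTerm k (cubeInfluence g e) / 4 := by
  set d : (E → Bool) → ℝ := fun x => g x - g (flipBit e x) with hd
  have d_pow_three : ∀ x, d x ^ 3 = d x := fun x => by
    rcases hg x with h | h <;> rcases hg (flipBit e x) with h' | h' <;> norm_num [hd, h, h']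
  have termwise : ∀ S : Finset E, (if e ∈ S then walshCoeff g S ^ 2 / S.card else 0) ≤
      ((if S.card ≤ k then walshCoeff d S ^ 2 else 0) + walshCoeff d S ^ 2 / (k + 1)) / 4 := by
    intro S
    rw [show walshCoeff d S = _ from walshCoeff_sub_flipBit g e S]
    by_cases he : e ∈ S
    · have one_le_card : (1 : ℝ) ≤ S.card := by exact_mod_cast Finset.card_pos.mpr ⟨e, he⟩
      simp only [he, if_true]
      split_ifs with hk
      · have low := div_le_self (sq_nonneg (walshCoeff g S)) one_le_card
        have : 0 ≤ (2 * walshCoeff g S) ^ 2 / ((k : ℝ) + 1) := by positivity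
        linarith
      · have succ_le_card : (k : ℝ) + 1 ≤ S.card := by exact_mod_cast not_le.mp hk
        calc walshCoeff g S ^ 2 / S.card ≤ walshCoeff g S ^ 2 / (k + 1) := by gcongr
          _ = (0 + (2 * walshCoeff g S) ^ 2 / (k + 1)) / 4 := by ring
    · simp [he]
  calc (∑ S, if e ∈ S then walshCoeff g S ^ 2 / S.card else 0)
      ≤ (∑ S, (if S.card ≤ k then walshCoeff d S ^ 2 else 0) +
          (∑ S, walshCoeff d S ^ 2) / (k + 1)) / 4 := by
        simpa only [← Finset.sum_div, Finset.sum_add_distrib] using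
          Finset.sum_le_sum fun S (_ : S ∈ Finset.univ) => termwise S
    _ ≤ talagrandTerm k (cubeInfluence g e) / 4 := by
        rw [← expect_sq_eq_sum_walshCoeff_sq, talagrandTerm, cubeInfluence]
        gcongr
        exact sum_walshCoeff_sq_card_le_le d_pow_three k

theorem expect_sq_sub_sq_expect_le_sum_talagrandTerm {g : (E → Bool) → ℝ}
    (hg : ∀ x, g x = 0 ∨ g x = 1) (k : E → ℕ) :
    𝔼 x, g x ^ 2 - (𝔼 x, g x) ^ 2 ≤ (∑ e, talagrandTerm (k e) (cubeInfluence g e)) / 4 := by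
  rw [expect_sq_sub_sq_expect_eq_sum, Finset.sum_div]
  exact Finset.sum_le_sum fun e _ => sum_walshCoeff_sq_div_card_le hg e (k e)

end Talagrand

/-! ### Sequential sampling from independent seeds -/

section Sampling

variable {ι A : Type*} [LinearOrder ι]

/-- A family indexed by an ordered set of coordinates is causal if its `i`-th member depends only
on the coordinates before `i`. Applied both to sampling rules and to conditional probabilities. -/
def IsCausal {β : Type*} (p : ι → (ι → Bool) → β) : Prop := ∀ i, DependsOn (p i) (Set.Iio i)

theorem IsCausal.update_const {β : Type*} {p : ι → (ι → Bool) → β} (hp : IsCausal p) (i : ι)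
    (c : β) : IsCausal (Function.update p i fun _ => c) := fun j => by
  rcases eq_or_ne j i with rfl | hj
  · rw [Function.update_self]
    exact fun _ _ _ => rfl
  · rw [Function.update_of_ne hj]
    exact hp j

/-- The rule `s` with the coordinate `i` forced to take the value `b`. -/
def forceRule (s : ι → (ι → Bool) → A → Bool) (i : ι) (b : Bool) : ι → (ι → Bool) → A → Bool :=
  Function.update s i fun _ _ => b

theorem IsCausal.forceRule {s : ι → (ι → Bool) → A → Bool} (hs : IsCausal s) (i : ι) (b : Bool) :
    IsCausal (forceRule s i b) :=
  hs.update_const i _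

variable [Fintype ι]

/-- The configuration sampled sequentially from the seeds `u`: the value at `i` is obtained by
applying the rule `s i` to the values before `i` and the seed `u i`. The rule is shown `false`
at all other coordinates, which is immaterial for causal rules. -/
noncomputable def sample (s : ι → (ι → Bool) → A → Bool) (u : ι → A) : ι → Bool :=
  wellFounded_lt.fix fun i past => s i (fun j => if h : j < i then past j h else false) (u i)

theorem sample_eq_past (s : ι → (ι → Bool) → A → Bool) (u : ι → A) (i : ι) :
    sample s u i = s i (fun j => if j < i then sample s u j else false) (u i) := by
  rw [sample, WellFounded.fix_eq]
  simp only [dite_eq_ite]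

theorem sample_congr {s s' : ι → (ι → Bool) → A → Bool} {u u' : ι → A} {i : ι}
    (h : ∀ j ≤ i, ∀ ω, s j ω (u j) = s' j ω (u' j)) : sample s u i = sample s' u' i := by
  induction i using WellFoundedLT.induction with
  | ind i ih =>
    have past : ∀ j < i, sample s u j = sample s' u' j := fun j hj =>
      ih j hj fun l hl => h l (hl.trans hj.le)
    rw [sample_eq_past, sample_eq_past, h i le_rfl]
    congr 1
    funext j
    split_ifs with hj
    exacts [past j hj, rfl]

theorem sample_forceRule_update (s : ι → (ι → Bool) → A → Bool) (u : ι → A) (i : ι) (a : A)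
    (b : Bool) : sample (forceRule s i b) (Function.update u i a) = sample (forceRule s i b) u := by
  funext l
  refine sample_congr fun j _ ω => ?_
  rcases eq_or_ne j i with rfl | hj
  · simp only [forceRule, Function.update_self]
  · simp only [forceRule, Function.update_of_ne hj]

theorem sample_forceRule_of_lt (s : ι → (ι → Bool) → A → Bool) (u : ι → A) {i j : ι} (b : Bool)
    (h : j < i) : sample (forceRule s i b) u j = sample s u j :=
  sample_congr fun l hl _ => by rw [forceRule, Function.update_of_ne (hl.trans_lt h).ne]

variable {s : ι → (ι → Bool) → A → Bool}

theorem sample_apply (hs : IsCausal s) (u : ι → A) (i : ι) :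
    sample s u i = s i (sample s u) (u i) := by
  rw [sample_eq_past]
  exact congrFun (hs i fun j hj => if_pos hj) (u i)

theorem sample_eq_iff (hs : IsCausal s) {u : ι → A} {ω : ι → Bool} :
    sample s u = ω ↔ ∀ i, s i ω (u i) = ω i := by
  refine ⟨?_, fun h => funext fun i => ?_⟩
  · rintro rfl i
    exact (sample_apply hs u i).symm
  · induction i using WellFoundedLT.induction with
    | ind i ih =>
      rw [sample_apply hs, ← h i]
      exact congrFun (hs i ih) (u i)

theorem expect_comp_sample (hs : IsCausal s) [Fintype A] (F : (ι → Bool) → ℝ) :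
    𝔼 u, F (sample s u) = ∑ ω, (∏ i, 𝔼 a, if s i ω a = ω i then (1 : ℝ) else 0) * F ω := by
  have indicator : ∀ u, F (sample s u) =
      ∑ ω, (∏ i, if s i ω (u i) = ω i then (1 : ℝ) else 0) * F ω := fun u => by
    simp only [Finset.prod_boole, Finset.mem_univ, true_imp_iff, ← sample_eq_iff hs, ite_mul,
      one_mul, zero_mul, Finset.sum_ite_eq, if_true]
  simp only [indicator, Finset.expect_sum_comm, ← Finset.expect_mul]
  refine Finset.sum_congr rfl fun ω _ => ?_
  rw [expect_prod_apply fun i a => if s i ω a = ω i then (1 : ℝ) else 0]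

theorem sample_forceRule_self (hs : IsCausal s) (u : ι → A) (i : ι) :
    sample (forceRule s i (sample s u i)) u = sample s u := by
  rw [sample_eq_iff (hs.forceRule i _)]
  intro j
  rcases eq_or_ne j i with rfl | hj
  · rw [forceRule, Function.update_self]
  · rw [forceRule, Function.update_of_ne hj, sample_apply hs]

theorem sample_apply_forceRule (hs : IsCausal s) (u : ι → A) (i : ι) (b : Bool) :
    sample s u i = s i (sample (forceRule s i b) u) (u i) := by
  rw [sample_apply hs]
  exact congrFun (hs i fun j hj => (sample_forceRule_of_lt s u b hj).symm) (u i)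

theorem sq_sub_sample_update_le (hs : IsCausal s) (F : (ι → Bool) → ℝ) (u : ι → A) (i : ι) (a : A) :
    (F (sample s u) - F (sample s (Function.update u i a))) ^ 2 ≤
      (if s i (sample (forceRule s i true) u) (u i) ≠ s i (sample (forceRule s i true) u) a
        then 1 else 0) *
      (F (sample (forceRule s i true) u) - F (sample (forceRule s i false) u)) ^ 2 := by
  set u' := Function.update u i a with hu'
  have new_value : s i (sample (forceRule s i true) u) a = sample s u' i := by
    rw [sample_apply_forceRule hs u' i true, hu', sample_forceRule_update, Function.update_self]
  have force_old := sample_forceRule_self hs u i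
  have force_new := sample_forceRule_self hs u' i
  rw [hu', sample_forceRule_update, ← hu'] at force_new
  rw [← sample_apply_forceRule hs, new_value]
  generalize sample s u i = b at force_old ⊢
  generalize sample s u' i = b' at force_new ⊢
  rw [← force_old, ← force_new]
  cases b <;> cases b' <;> simp [sub_sq_comm]

/-- The mean square effect on `F` of forcing the coordinate `i` to `true` rather than `false` while
sampling with the rule `s`. -/
noncomputable def forcedInfluence [Fintype A] (s : ι → (ι → Bool) → A → Bool)
    (F : (ι → Bool) → ℝ) (i : ι) : ℝ :=
  𝔼 u, (F (sample (forceRule s i true) u) - F (sample (forceRule s i false) u)) ^ 2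

theorem forcedInfluence_nonneg [Fintype A] (s : ι → (ι → Bool) → A → Bool)
    (F : (ι → Bool) → ℝ) (i : ι) : 0 ≤ forcedInfluence s F i :=
  Finset.expect_nonneg fun _ _ => sq_nonneg _

theorem expect_sq_sub_sample_update_le [Fintype A] [Nonempty A] (hs : IsCausal s)
    (F : (ι → Bool) → ℝ) (i : ι) (τ : A → A) {δ : ℝ}
    (hδ : ∀ ω, (𝔼 a, if s i ω a ≠ s i ω (τ a) then (1 : ℝ) else 0) ≤ δ) :
    𝔼 u, (F (sample s u) - F (sample s (Function.update u i (τ (u i))))) ^ 2 ≤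
      δ * forcedInfluence s F i := by
  refine (Finset.expect_le_expect fun u _ => sq_sub_sample_update_le hs F u i _).trans ?_
  rw [← expect_expect_update _ i, forcedInfluence, Finset.mul_expect]
  refine Finset.expect_le_expect fun u _ => ?_
  simp only [sample_forceRule_update, Function.update_self, ← Finset.expect_mul]
  gcongr
  exact hδ _

theorem expect_sample_sq_sub_sq_le {B : Type*} [Fintype B] [DecidableEq B]
    {s : ι → (ι → Bool) → (B → Bool) → Bool} (hs : IsCausal s) {F : (ι → Bool) → ℝ}
    (hF : ∀ ω, F ω = 0 ∨ F ω = 1) {δ : B → ℝ} (hδ_one : ∀ j, δ j ≤ 1)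
    (hδ : ∀ i ω j, (𝔼 a, if s i ω a ≠ s i ω (flipBit j a) then (1 : ℝ) else 0) ≤ δ j)
    (k : ι → ℕ) :
    𝔼 u, F (sample s u) ^ 2 - (𝔼 u, F (sample s u)) ^ 2 ≤
      (∑ j, δ j) / 4 * ∑ i, talagrandTerm (k i) (forcedInfluence s F i) := by
  let g (x : ι × B → Bool) : ℝ := F (sample s (Function.curry x))
  have g_boolean : ∀ x, g x = 0 ∨ g x = 1 := fun x => hF (sample s (Function.curry x))
  have expect_curry : ∀ G : (ι → B → Bool) → ℝ, 𝔼 x, G (Function.curry x) = 𝔼 u, G u :=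
    fun G => Fintype.expect_equiv (Equiv.curry ι B Bool) _ _ fun _ => rfl
  have δ_nonneg : ∀ (_ : ι) j, 0 ≤ δ j := fun i j =>
    (Finset.expect_nonneg fun _ _ => by positivity).trans (hδ i (fun _ => false) j)
  have influence_le : ∀ i j, cubeInfluence g (i, j) ≤ δ j * forcedInfluence s F i := fun i j => by
    simp only [cubeInfluence, g, curry_flipBit]
    rw [expect_curry fun u =>
      (F (sample s u) - F (sample s (Function.update u i (flipBit j (u i))))) ^ 2]
    exact expect_sq_sub_sample_update_le hs F i (flipBit j) fun ω => hδ i ω j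
  calc 𝔼 u, F (sample s u) ^ 2 - (𝔼 u, F (sample s u)) ^ 2
      = 𝔼 x, g x ^ 2 - (𝔼 x, g x) ^ 2 := by
        rw [← expect_curry fun u => F (sample s u) ^ 2, ← expect_curry fun u => F (sample s u)]
    _ ≤ (∑ e : ι × B, talagrandTerm (k e.1) (cubeInfluence g e)) / 4 :=
        expect_sq_sub_sq_expect_le_sum_talagrandTerm g_boolean fun e => k e.1
    _ ≤ (∑ i, ∑ j, δ j * talagrandTerm (k i) (forcedInfluence s F i)) / 4 := by
        rw [Fintype.sum_prod_type]
        gcongr with i _ j _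
        exact (talagrandTerm_monotone _ (influence_le i j)).trans
          (talagrandTerm_mul_le _ (δ_nonneg i j) (hδ_one j) _)
    _ = (∑ j, δ j) / 4 * ∑ i, talagrandTerm (k i) (forcedInfluence s F i) := by
        simp only [← Finset.sum_mul, ← Finset.mul_sum]
        ring

end Sampling

/-! ### Dyadic thresholds -/

section Threshold

variable {m : ℕ}

/-- The number whose binary digits are the bits of `a`, least significant bit first. -/
def bitsValue : (Fin m → Bool) ≃ Fin (2 ^ m) :=
  (Equiv.arrowCongr (Equiv.refl _) finTwoEquiv.symm).trans finFunctionFinEquiv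

theorem val_bitsValue (a : Fin m → Bool) :
    (bitsValue a : ℕ) = ∑ j, if a j then 2 ^ (j : ℕ) else 0 := by
  simp only [bitsValue, Equiv.trans_apply, finFunctionFinEquiv_apply]
  refine Finset.sum_congr rfl fun j _ => ?_
  cases h : a j <;> simp [h, finTwoEquiv]

theorem val_bitsValue_flipBit (a : Fin m → Bool) (j : Fin m) :
    (bitsValue (flipBit j a) : ℕ) + (if a j then 2 ^ (j : ℕ) else 0) =
      bitsValue a + if a j then 0 else 2 ^ (j : ℕ) := by
  have other_bits : ∑ l ∈ Finset.univ.erase j, (if flipBit j a l then 2 ^ (l : ℕ) else 0) =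
      ∑ l ∈ Finset.univ.erase j, if a l then 2 ^ (l : ℕ) else 0 :=
    Finset.sum_congr rfl fun l hl => by rw [flipBit_of_ne (Finset.ne_of_mem_erase hl)]
  rw [val_bitsValue, val_bitsValue, ← Finset.add_sum_erase _ _ (Finset.mem_univ j),
    ← Finset.add_sum_erase _ (fun l => if a l then 2 ^ (l : ℕ) else 0) (Finset.mem_univ j),
    other_bits, flipBit_self]
  cases a j <;> simp [add_comm]

/-- The bit that is `true` with probability `t / 2 ^ m` when `a` is a uniform string of `m` bits. -/
def thresholdBit (t : ℕ) (a : Fin m → Bool) : Bool := decide ((bitsValue a : ℕ) < t)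

theorem thresholdBit_mono {t t' : ℕ} (h : t ≤ t') (a : Fin m → Bool) :
    thresholdBit t a ≤ thresholdBit t' a := by
  simpa only [thresholdBit, Bool.le_iff_imp, decide_eq_true_eq] using fun ha => ha.trans_le h

theorem expect_comp_bitsValue (G : Fin (2 ^ m) → ℝ) :
    𝔼 a, G (bitsValue a) = (∑ v, G v) / 2 ^ m := by
  rw [Fintype.expect_equiv bitsValue _ G fun _ => rfl, Fintype.expect_eq_sum_div_card,
    Fintype.card_fin, Nat.cast_pow, Nat.cast_ofNat]

theorem expect_thresholdBit_eq {t : ℕ} (ht : t ≤ 2 ^ m) (b : Bool) :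
    (𝔼 a : Fin m → Bool, if thresholdBit t a = b then (1 : ℝ) else 0) =
      if b then (t : ℝ) / 2 ^ m else 1 - (t : ℝ) / 2 ^ m := by
  have prob_true : (𝔼 a : Fin m → Bool, if thresholdBit t a then (1 : ℝ) else 0) = t / 2 ^ m := by
    simp only [thresholdBit, decide_eq_true_eq]
    rw [expect_comp_bitsValue fun v => if (v : ℕ) < t then 1 else 0, Finset.sum_boole,
      Fin.card_filter_val_lt, min_eq_right ht]
  cases b
  · have complement : ∀ a : Fin m → Bool, (if thresholdBit t a = false then (1 : ℝ) else 0) =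
        1 - if thresholdBit t a then 1 else 0 := fun a => by cases thresholdBit t a <;> simp
    simp only [complement, Finset.expect_sub_distrib, prob_true, Fintype.expect_const,
      Bool.false_eq_true, if_false]
  · simpa using prob_true

theorem expect_thresholdBit_ne_flipBit_le (t : ℕ) (j : Fin m) :
    (𝔼 a, if thresholdBit t a ≠ thresholdBit t (flipBit j a) then (1 : ℝ) else 0) ≤
      2 * 2 ^ (j : ℕ) / 2 ^ m := by
  let window := Finset.Ico (t - 2 ^ (j : ℕ)) (t + 2 ^ (j : ℕ))
  have window_of_ne : ∀ a : Fin m → Bool, thresholdBit t a ≠ thresholdBit t (flipBit j a) →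
      (bitsValue a : ℕ) ∈ window := fun a => by
    have hflip := val_bitsValue_flipBit a j
    rw [Finset.mem_Ico, thresholdBit, thresholdBit, ne_eq, decide_eq_decide]
    generalize 2 ^ (j : ℕ) = q at *
    split_ifs at hflip <;> omega
  have card_window : (Finset.univ.filter fun v : Fin (2 ^ m) => (v : ℕ) ∈ window).card ≤
      2 * 2 ^ (j : ℕ) :=
    calc _ ≤ window.card := Finset.card_le_card_of_injOn Fin.val (fun v hv => by simpa using hv)
          Fin.val_injective.injOn
      _ ≤ 2 * 2 ^ (j : ℕ) := by rw [Nat.card_Ico]; omega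
  calc (𝔼 a, if thresholdBit t a ≠ thresholdBit t (flipBit j a) then (1 : ℝ) else 0)
      ≤ 𝔼 a, if (bitsValue a : ℕ) ∈ window then (1 : ℝ) else 0 :=
        Finset.expect_le_expect fun a _ => by
          by_cases h : thresholdBit t a ≠ thresholdBit t (flipBit j a)
          · rw [if_pos h, if_pos (window_of_ne a h)]
          · rw [if_neg h]
            positivity
    _ = (Finset.univ.filter fun v : Fin (2 ^ m) => (v : ℕ) ∈ window).card / 2 ^ m := by
        rw [expect_comp_bitsValue fun v => if (v : ℕ) ∈ window then 1 else 0, Finset.sum_boole]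
    _ ≤ 2 * 2 ^ (j : ℕ) / 2 ^ m := by
        gcongr
        exact_mod_cast card_window

theorem two_mul_two_pow_div_le_one (j : Fin m) : (2 : ℝ) * 2 ^ (j : ℕ) / 2 ^ m ≤ 1 := by
  rw [div_le_one (by positivity), ← pow_succ']
  exact pow_le_pow_right₀ one_le_two j.2

theorem sum_two_mul_two_pow_div_le_two : ∑ j : Fin m, (2 : ℝ) * 2 ^ (j : ℕ) / 2 ^ m ≤ 2 := by
  rw [← Finset.sum_div, ← Finset.mul_sum, Fin.sum_univ_eq_sum_range (fun j => (2 : ℝ) ^ j) m,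
    geom_sum_eq (by norm_num), div_le_iff₀ (by positivity)]
  linarith

end Threshold

/-! ### Measures specified by sequential conditional probabilities -/

section Kernel

open Filter Topology

variable {ι : Type*} [LinearOrder ι]

/-- `p` is a family of sequential conditional probabilities: `p i ω` stands for the probability that
the coordinate `i` is `true` given that the coordinates before `i` are as in `ω`. -/
structure IsKernel (p : ι → (ι → Bool) → ℝ) : Prop where
  nonneg : ∀ i ω, 0 ≤ p i ω
  le_one : ∀ i ω, p i ω ≤ 1
  causal : IsCausal p

/-- Domination of kernels, uniformly over ordered pairs of pasts. In particular `KernelLE p p` says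
that `p` is monotone in the past. -/
def KernelLE (p q : ι → (ι → Bool) → ℝ) : Prop :=
  ∀ i ξ ζ, (∀ j < i, ξ j ≤ ζ j) → p i ξ ≤ q i ζ

/-- The kernel `p` with the coordinate `i` forced to take the value `b`. -/
noncomputable def forceKernel (p : ι → (ι → Bool) → ℝ) (i : ι) (b : Bool) :
    ι → (ι → Bool) → ℝ :=
  Function.update p i fun _ => if b then 1 else 0

theorem forceKernel_self (p : ι → (ι → Bool) → ℝ) (i : ι) (b : Bool) (ω : ι → Bool) :
    forceKernel p i b i ω = if b then 1 else 0 := by rw [forceKernel, Function.update_self]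

theorem forceKernel_of_ne (p : ι → (ι → Bool) → ℝ) {i j : ι} (hj : j ≠ i) (b : Bool) :
    forceKernel p i b j = p j := Function.update_of_ne hj ..

theorem IsKernel.forceKernel {p : ι → (ι → Bool) → ℝ} (hp : IsKernel p) (i : ι) (b : Bool) :
    IsKernel (forceKernel p i b) where
  nonneg j ω := by
    rcases eq_or_ne j i with rfl | hj
    · rw [forceKernel_self]
      positivity
    · rw [forceKernel_of_ne p hj]
      exact hp.nonneg j ω
  le_one j ω := by
    rcases eq_or_ne j i with rfl | hj
    · rw [forceKernel_self]
      cases b <;> simp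
    · rw [forceKernel_of_ne p hj]
      exact hp.le_one j ω
  causal := hp.causal.update_const i _

theorem KernelLE.forceKernel {p : ι → (ι → Bool) → ℝ} (hp : KernelLE p p) (i : ι) :
    KernelLE (forceKernel p i false) (forceKernel p i true) := fun j ξ ζ h => by
  rcases eq_or_ne j i with rfl | hj
  · simp [forceKernel_self]
  · simpa only [forceKernel_of_ne p hj] using hp j ξ ζ h

/-- The sampling rule with `m`-bit seeds that realizes `p` with probabilities rounded down to
multiples of `1 / 2 ^ m`. -/
noncomputable def dyadicRule (p : ι → (ι → Bool) → ℝ) (m : ℕ) (i : ι) (ω : ι → Bool)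
    (a : Fin m → Bool) : Bool :=
  thresholdBit ⌊p i ω * 2 ^ m⌋₊ a

theorem IsKernel.isCausal_dyadicRule {p : ι → (ι → Bool) → ℝ} (hp : IsKernel p) (m : ℕ) :
    IsCausal (dyadicRule p m) := fun i ω ω' h => by
  funext a
  rw [dyadicRule, dyadicRule, hp.causal i h]

theorem forceRule_dyadicRule (p : ι → (ι → Bool) → ℝ) (m : ℕ) (i : ι) (b : Bool) :
    forceRule (dyadicRule p m) i b = dyadicRule (forceKernel p i b) m := by
  have floor_two_pow : ⌊(2 : ℝ) ^ m⌋₊ = 2 ^ m := by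
    exact_mod_cast Nat.floor_natCast (R := ℝ) (2 ^ m)
  funext j ω a
  rcases eq_or_ne j i with rfl | hj
  · cases b <;> simp [forceRule, dyadicRule, forceKernel_self, thresholdBit, floor_two_pow]
  · simp only [forceRule, Function.update_of_ne hj, dyadicRule, forceKernel_of_ne p hj]

variable [Fintype ι]

/-- The weight with sequential conditional probabilities `p`. -/
noncomputable def kernelWeight (p : ι → (ι → Bool) → ℝ) (ω : ι → Bool) : ℝ :=
  ∏ i, if ω i then p i ω else 1 - p i ω

theorem expect_comp_sample_dyadicRule {p : ι → (ι → Bool) → ℝ} (hp : IsKernel p) (m : ℕ)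
    (F : (ι → Bool) → ℝ) :
    𝔼 u, F (sample (dyadicRule p m) u) =
      wExp (kernelWeight fun i ω => (⌊p i ω * 2 ^ m⌋₊ : ℝ) / 2 ^ m) F := by
  have threshold_le : ∀ i ω, ⌊p i ω * 2 ^ m⌋₊ ≤ 2 ^ m := fun i ω =>
    Nat.floor_le_of_le <| by
      push_cast
      exact mul_le_of_le_one_left (by positivity) (hp.le_one i ω)
  rw [expect_comp_sample (hp.isCausal_dyadicRule m)]
  exact Finset.sum_congr rfl fun ω _ => congrArg (· * F ω) <|
    Finset.prod_congr rfl fun i _ => expect_thresholdBit_eq (threshold_le i ω) (ω i)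

theorem tendsto_expect_comp_sample_dyadicRule {p : ι → (ι → Bool) → ℝ} (hp : IsKernel p)
    (F : (ι → Bool) → ℝ) :
    Tendsto (fun m => 𝔼 u, F (sample (dyadicRule p m) u)) atTop
      (𝓝 (wExp (kernelWeight p) F)) := by
  have two_pow : Tendsto (fun m : ℕ => (2 : ℝ) ^ m) atTop atTop :=
    tendsto_pow_atTop_atTop_of_one_lt one_lt_two
  have rounding : ∀ i ω, Tendsto (fun m : ℕ => (⌊p i ω * 2 ^ m⌋₊ : ℝ) / 2 ^ m) atTop
      (𝓝 (p i ω)) := fun i ω =>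
    (tendsto_nat_floor_mul_div_atTop (hp.nonneg i ω)).comp two_pow
  simp only [expect_comp_sample_dyadicRule hp]
  refine tendsto_finsetSum _ fun ω _ => Tendsto.mul_const _ (tendsto_finsetProd _ fun i _ => ?_)
  split_ifs
  exacts [rounding i ω, (rounding i ω).const_sub 1]

theorem sample_dyadicRule_mono {p q : ι → (ι → Bool) → ℝ} (hp : IsKernel p) (hq : IsKernel q)
    (hpq : KernelLE p q) {m : ℕ} (u : ι → Fin m → Bool) :
    sample (dyadicRule p m) u ≤ sample (dyadicRule q m) u := fun i => by
  induction i using WellFoundedLT.induction with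
  | ind i ih =>
    rw [sample_apply (hp.isCausal_dyadicRule m), sample_apply (hq.isCausal_dyadicRule m)]
    have := hpq i _ _ ih
    exact thresholdBit_mono (Nat.floor_le_floor (by gcongr)) (u i)

theorem wExp_kernelWeight_mono {p q : ι → (ι → Bool) → ℝ} (hp : IsKernel p) (hq : IsKernel q)
    (hpq : KernelLE p q) {F : (ι → Bool) → ℝ} (hF : Monotone F) :
    wExp (kernelWeight p) F ≤ wExp (kernelWeight q) F :=
  le_of_tendsto_of_tendsto' (tendsto_expect_comp_sample_dyadicRule hp F)
    (tendsto_expect_comp_sample_dyadicRule hq F) fun _ =>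
    Finset.expect_le_expect fun u _ => hF (sample_dyadicRule_mono hp hq hpq u)

/-- The effect on the mean of `F` of forcing the coordinate `i` to `true` rather than `false` in the
kernel `p`. -/
noncomputable def kernelInfluence (p : ι → (ι → Bool) → ℝ) (F : (ι → Bool) → ℝ) (i : ι) : ℝ :=
  wExp (kernelWeight (forceKernel p i true)) F - wExp (kernelWeight (forceKernel p i false)) F

theorem forcedInfluence_dyadicRule {p : ι → (ι → Bool) → ℝ} (hp : IsKernel p)
    (hp_mono : KernelLE p p) {F : (ι → Bool) → ℝ} (hF : ∀ ω, F ω = 0 ∨ F ω = 1)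
    (hF_mono : Monotone F) (m : ℕ) (i : ι) :
    forcedInfluence (dyadicRule p m) F i =
      𝔼 u, F (sample (dyadicRule (forceKernel p i true) m) u) -
        𝔼 u, F (sample (dyadicRule (forceKernel p i false) m) u) := by
  simp only [forcedInfluence, forceRule_dyadicRule, ← Finset.expect_sub_distrib]
  refine Finset.expect_congr rfl fun u _ => ?_
  have coupling := hF_mono <| sample_dyadicRule_mono (hp.forceKernel i false)
    (hp.forceKernel i true) (hp_mono.forceKernel i) u
  rcases hF (sample (dyadicRule (forceKernel p i true) m) u) with h | h <;>
    rcases hF (sample (dyadicRule (forceKernel p i false) m) u) with h' | h' <;>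
    rw [h, h'] at coupling ⊢ <;> first | (norm_num; done) | norm_num at coupling

theorem wExp_sq_sub_sq_wExp_kernelWeight_le {p : ι → (ι → Bool) → ℝ} (hp : IsKernel p)
    (hp_mono : KernelLE p p) {F : (ι → Bool) → ℝ} (hF : ∀ ω, F ω = 0 ∨ F ω = 1)
    (hF_mono : Monotone F) (k : ι → ℕ) :
    wExp (kernelWeight p) (fun ω => F ω ^ 2) - wExp (kernelWeight p) F ^ 2 ≤
      (∑ i, talagrandTerm (k i) (kernelInfluence p F i)) / 2 := by
  have influence_tendsto : ∀ i, Tendsto (fun m => forcedInfluence (dyadicRule p m) F i) atTop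
      (𝓝 (kernelInfluence p F i)) := fun i => by
    simp only [forcedInfluence_dyadicRule hp hp_mono hF hF_mono]
    exact (tendsto_expect_comp_sample_dyadicRule (hp.forceKernel i true) F).sub
      (tendsto_expect_comp_sample_dyadicRule (hp.forceKernel i false) F)
  refine le_of_tendsto_of_tendsto'
    ((tendsto_expect_comp_sample_dyadicRule hp fun ω => F ω ^ 2).sub
      ((tendsto_expect_comp_sample_dyadicRule hp F).pow 2))
    ((tendsto_finsetSum _ fun i _ =>
      ((continuous_talagrandTerm (k i)).tendsto _).comp (influence_tendsto i)).div_const 2)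
    fun m => ?_
  calc _ ≤ (∑ j : Fin m, (2 : ℝ) * 2 ^ (j : ℕ) / 2 ^ m) / 4 *
        ∑ i, talagrandTerm (k i) (forcedInfluence (dyadicRule p m) F i) :=
        expect_sample_sq_sub_sq_le (hp.isCausal_dyadicRule m) hF two_mul_two_pow_div_le_one
          (fun _ _ => expect_thresholdBit_ne_flipBit_le _) k
    _ ≤ 2 / 4 * ∑ i, talagrandTerm (k i) (forcedInfluence (dyadicRule p m) F i) := by
        gcongr
        · exact Finset.sum_nonneg fun i _ => talagrandTerm_nonneg _ (forcedInfluence_nonneg ..)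
        · exact sum_two_mul_two_pow_div_le_two
    _ = _ := by
        simp only [Function.comp_apply]
        ring

end Kernel

/-! ### Weights on the cube -/

section Weight

variable {ι : Type*} [DecidableEq ι]

theorem agreesOn_insert_update {i : ι} {F : Finset ι} (hi : i ∉ F) (ξ : ι → Bool) (b : Bool)
    (ω : ι → Bool) :
    agreesOn (insert i F) (Function.update ξ i b) ω ↔ ω i = b ∧ agreesOn F ξ ω := by
  rw [agreesOn, Finset.forall_mem_insert, Function.update_self]
  refine and_congr_right fun _ => forall₂_congr fun j hj => ?_
  rw [Function.update_of_ne (ne_of_mem_of_not_mem hj hi)]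

variable [Fintype ι] {w : (ι → Bool) → ℝ}

theorem wProb_nonneg (hw : ∀ ω, 0 ≤ w ω) (A : (ι → Bool) → Prop) : 0 ≤ wProb w A :=
  Finset.sum_nonneg fun ω _ => mul_nonneg (hw ω) (by positivity)

theorem wProb_mono (hw : ∀ ω, 0 ≤ w ω) {A B : (ι → Bool) → Prop} (h : ∀ ω, A ω → B ω) :
    wProb w A ≤ wProb w B := by
  refine Finset.sum_le_sum fun ω _ => mul_le_mul_of_nonneg_left ?_ (hw ω)
  by_cases hA : A ω
  · rw [if_pos hA, if_pos (h ω hA)]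
  · rw [if_neg hA]
    positivity

theorem wProb_congr {A B : (ι → Bool) → Prop} (h : ∀ ω, A ω ↔ B ω) : wProb w A = wProb w B :=
  congrArg (wProb w) (funext fun ω => propext (h ω))

theorem exists_of_wProb_pos {A : (ι → Bool) → Prop} (h : 0 < wProb w A) : ∃ ω, A ω := by
  by_contra! not_A
  exact h.ne' <| Finset.sum_eq_zero fun ω _ => by rw [if_neg (not_A ω), mul_zero]

theorem wProb_true (w : (ι → Bool) → ℝ) : wProb w (fun _ => True) = ∑ ω, w ω := by
  simp only [wProb, if_true, mul_one]

theorem wProb_eq_add (i : ι) (A : (ι → Bool) → Prop) :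
    wProb w A = wProb w (fun ω => ω i = true ∧ A ω) + wProb w (fun ω => ω i = false ∧ A ω) := by
  simp only [wProb, ← Finset.sum_add_distrib]
  refine Finset.sum_congr rfl fun ω _ => ?_
  by_cases h : ω i = true <;> simp [h]

theorem wProb_agreesOn_univ (w : (ι → Bool) → ℝ) (ω : ι → Bool) :
    wProb w (agreesOn Finset.univ ω) = w ω := by
  simp [wProb, agreesOn, ← funext_iff]

/-- The weight of `μ[· | ω_i = b]`; it vanishes identically when `ω_i = b` is a null event. -/
noncomputable def condWeight (w : (ι → Bool) → ℝ) (i : ι) (b : Bool) (ω : ι → Bool) : ℝ :=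
  if ω i = b then w ω / wProb w (fun η => η i = b) else 0

theorem wProb_condWeight (i : ι) (b : Bool) (A : (ι → Bool) → Prop) :
    wProb (condWeight w i b) A =
      wProb w (fun ω => ω i = b ∧ A ω) / wProb w (fun ω => ω i = b) := by
  rw [wProb, wProb, Finset.sum_div]
  refine Finset.sum_congr rfl fun ω _ => ?_
  by_cases hb : ω i = b <;> by_cases hA : A ω <;> simp [condWeight, hb, hA]

theorem isProbWeight_condWeight (hw : ∀ ω, 0 ≤ w ω) {i : ι} {b : Bool}
    (hb : 0 < wProb w fun ω => ω i = b) : IsProbWeight (condWeight w i b) where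
  left ω := by
    unfold condWeight
    have := hw ω
    split_ifs <;> positivity
  right := by
    rw [← wProb_true, wProb_condWeight]
    simpa only [and_true] using div_self hb.ne'

theorem wExp_boolInd (w : (ι → Bool) → ℝ) (f : (ι → Bool) → Bool) :
    wExp w (boolInd f) = wProb w fun ω => f ω = true :=
  Finset.sum_congr rfl fun ω _ => by
    unfold boolInd
    congr

theorem condInfluence_eq (w : (ι → Bool) → ℝ) (f : (ι → Bool) → Bool) (i : ι) :
    condInfluence w f i =
      wExp (condWeight w i true) (boolInd f) - wExp (condWeight w i false) (boolInd f) := by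
  simp only [condInfluence, wExp_boolInd, wProb_condWeight, and_comm]

theorem IsMonotonic.wProb_mul_le (hm : IsMonotonic w) (hw : ∀ ω, 0 ≤ w ω) (i e : ι)
    (F : Finset ι) (ξ : ι → Bool) :
    wProb w (fun ω => ω i = false ∧ ω e = true ∧ agreesOn F ξ ω) *
        wProb w (fun ω => ω i = true ∧ agreesOn F ξ ω) ≤
      wProb w (fun ω => ω i = true ∧ ω e = true ∧ agreesOn F ξ ω) *
        wProb w (fun ω => ω i = false ∧ agreesOn F ξ ω) := by
  have joint_le : ∀ b, wProb w (fun ω => ω i = b ∧ ω e = true ∧ agreesOn F ξ ω) ≤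
      wProb w (fun ω => ω i = b ∧ agreesOn F ξ ω) := fun b => wProb_mono hw fun _ h => ⟨h.1, h.2.2⟩
  have joint_nonneg : ∀ b, 0 ≤ wProb w (fun ω => ω i = b ∧ ω e = true ∧ agreesOn F ξ ω) :=
    fun b => wProb_nonneg hw _
  rcases ((joint_nonneg true).trans (joint_le true)).eq_or_lt with h_true | h_true
  · rw [← h_true, mul_zero]
    exact mul_nonneg (joint_nonneg true) ((joint_nonneg false).trans (joint_le false))
  rcases ((joint_nonneg false).trans (joint_le false)).eq_or_lt with h_false | h_false
  · rw [← h_false, mul_zero, le_antisymm (h_false ▸ joint_le false) (joint_nonneg false), zero_mul]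
  have hi : i ∉ F := fun hi => by
    obtain ⟨ω, hω, hωξ⟩ := exists_of_wProb_pos h_true
    obtain ⟨η, hη, hηξ⟩ := exists_of_wProb_pos h_false
    simpa [hω, hη] using (hωξ i hi).trans (hηξ i hi).symm
  have cylinder_eq : ∀ b, wProb w (agreesOn (insert i F) (Function.update ξ i b)) =
      wProb w (fun ω => ω i = b ∧ agreesOn F ξ ω) :=
    fun b => wProb_congr (agreesOn_insert_update hi ξ b)
  have joint_eq : ∀ b,
      wProb w (fun ω => ω e = true ∧ agreesOn (insert i F) (Function.update ξ i b) ω) =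
        wProb w (fun ω => ω i = b ∧ ω e = true ∧ agreesOn F ξ ω) :=
    fun b => wProb_congr fun ω => by rw [agreesOn_insert_update hi, and_left_comm]
  have ratio_le := hm e (insert i F) (Function.update ξ i false) (Function.update ξ i true)
    fun j _ => update_le_update_iff'.2 (Bool.false_le true) j
  rw [cylinder_eq, cylinder_eq, joint_eq, joint_eq] at ratio_le
  exact (div_le_div_iff₀ h_false h_true).1 (ratio_le h_false h_true)

theorem IsMonotonic.wProb_mul_wProb_le (hm : IsMonotonic w) (hw : ∀ ω, 0 ≤ w ω) (i e : ι)
    (F : Finset ι) (ξ : ι → Bool) :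
    wProb w (fun ω => ω e = true ∧ agreesOn F ξ ω) *
        wProb w (fun ω => ω i = true ∧ agreesOn F ξ ω) ≤
      wProb w (fun ω => ω i = true ∧ ω e = true ∧ agreesOn F ξ ω) * wProb w (agreesOn F ξ) := by
  rw [wProb_eq_add i fun ω => ω e = true ∧ agreesOn F ξ ω, wProb_eq_add i (agreesOn F ξ)]
  linarith [hm.wProb_mul_le hw i e F ξ]

theorem IsMonotonic.wProb_mul_wProb_ge (hm : IsMonotonic w) (hw : ∀ ω, 0 ≤ w ω) (i e : ι)
    (F : Finset ι) (ξ : ι → Bool) :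
    wProb w (fun ω => ω i = false ∧ ω e = true ∧ agreesOn F ξ ω) * wProb w (agreesOn F ξ) ≤
      wProb w (fun ω => ω e = true ∧ agreesOn F ξ ω) *
        wProb w (fun ω => ω i = false ∧ agreesOn F ξ ω) := by
  rw [wProb_eq_add i fun ω => ω e = true ∧ agreesOn F ξ ω, wProb_eq_add i (agreesOn F ξ)]
  linarith [hm.wProb_mul_le hw i e F ξ]

end Weight

/-! ### The sequential kernel of a monotonic measure -/

section SequentialKernel

variable {ι : Type*} [LinearOrder ι] [Fintype ι]

/-- The coordinates sampled before `i`. -/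
def past (i : ι) : Finset ι := {j | j < i}

theorem mem_past {i j : ι} : j ∈ past i ↔ j < i := by simp [past]

theorem agreesOn_past_congr {i : ι} {ξ ζ : ι → Bool} (h : ∀ j < i, ξ j = ζ j) :
    agreesOn (past i) ξ = agreesOn (past i) ζ :=
  funext fun _ => propext <| forall₂_congr fun j hj => by rw [h j (mem_past.1 hj)]

variable {w : (ι → Bool) → ℝ}

theorem wProb_agreesOn_eq_prod (hsum : ∑ ω, w ω = 1) {p : ι → (ι → Bool) → ℝ} {ω : ι → Bool}
    (hp : ∀ i, p i ω * wProb w (agreesOn (past i) ω) =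
      wProb w fun η => η i = true ∧ agreesOn (past i) ω η)
    (F : Finset ι) (hF : IsLowerSet (F : Set ι)) :
    wProb w (agreesOn F ω) = ∏ i ∈ F, if ω i then p i ω else 1 - p i ω := by
  induction F using Finset.induction_on_max with
  | empty =>
    rw [Finset.prod_empty, wProb_congr fun _ => iff_true_intro (by simp [agreesOn]), wProb_true,
      hsum]
  | insert i F lt_i ih =>
    have hi : i ∉ F := fun h => (lt_i i h).false
    obtain rfl : F = past i := by
      ext j
      refine ⟨fun hj => mem_past.2 (lt_i j hj), fun hj => ?_⟩
      have hji := mem_past.1 hj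
      exact Finset.mem_of_mem_insert_of_ne (hF hji.le (Finset.mem_insert_self i F)) hji.ne
    have past_isLowerSet : IsLowerSet (past i : Set ι) := fun j l hlj hj =>
      mem_past.2 (hlj.trans_lt (mem_past.1 hj))
    have cylinder_eq : wProb w (agreesOn (insert i (past i)) ω) =
        wProb w fun η => η i = ω i ∧ agreesOn (past i) ω η :=
      wProb_congr fun η => Finset.forall_mem_insert ..
    have split := wProb_eq_add (w := w) i (agreesOn (past i) ω)
    rw [Finset.prod_insert hi, ← ih past_isLowerSet, cylinder_eq]
    cases ω i
    · rw [if_neg Bool.false_ne_true]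
      linarith [hp i]
    · rw [if_pos rfl, hp i]

theorem kernelWeight_eq (hsum : ∑ ω, w ω = 1) {p : ι → (ι → Bool) → ℝ}
    (hp : ∀ i ω, p i ω * wProb w (agreesOn (past i) ω) =
      wProb w fun η => η i = true ∧ agreesOn (past i) ω η) :
    kernelWeight p = w := funext fun ω => by
  rw [← wProb_agreesOn_univ w ω, wProb_agreesOn_eq_prod hsum (fun i => hp i ω) _
    (by simpa using isLowerSet_univ), kernelWeight]

/-- The sequential conditional probabilities of `w`, with the default value `d` when the past is a
null event. -/
noncomputable def seqKernel (w : (ι → Bool) → ℝ) (d : ℝ) (i : ι) (ω : ι → Bool) : ℝ :=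
  if 0 < wProb w (agreesOn (past i) ω) then
    wProb w (fun η => η i = true ∧ agreesOn (past i) ω η) / wProb w (agreesOn (past i) ω)
  else d

theorem isKernel_seqKernel (hw : ∀ ω, 0 ≤ w ω) {d : ℝ} (hd : d ∈ Set.Icc 0 1) :
    IsKernel (seqKernel w d) where
  nonneg i ω := by
    unfold seqKernel
    split_ifs
    exacts [div_nonneg (wProb_nonneg hw _) (wProb_nonneg hw _), hd.1]
  le_one i ω := by
    unfold seqKernel
    split_ifs
    exacts [div_le_one_of_le₀ (wProb_mono hw fun _ h => h.2) (wProb_nonneg hw _), hd.2]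
  causal i ξ ζ h := by simp only [seqKernel, agreesOn_past_congr h]

theorem mul_wProb_agreesOn_past (hw : ∀ ω, 0 ≤ w ω) {p : ι → (ι → Bool) → ℝ} {d : ℝ} {i : ι}
    {ω : ι → Bool} (hp : 0 < wProb w (agreesOn (past i) ω) → p i ω = seqKernel w d i ω) :
    p i ω * wProb w (agreesOn (past i) ω) =
      wProb w fun η => η i = true ∧ agreesOn (past i) ω η := by
  rcases (wProb_nonneg hw (agreesOn (past i) ω)).eq_or_lt with null | pos
  · rw [← null, mul_zero]
    exact le_antisymm (wProb_nonneg hw _) (null ▸ wProb_mono hw fun _ h => h.2)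
  · rw [hp pos, seqKernel, if_pos pos, div_mul_cancel₀ _ pos.ne']

theorem kernelWeight_eq_of_eq_seqKernel (hw : IsProbWeight w) {p : ι → (ι → Bool) → ℝ} {d : ℝ}
    (hp : ∀ i ω, 0 < wProb w (agreesOn (past i) ω) → p i ω = seqKernel w d i ω) :
    kernelWeight p = w :=
  kernelWeight_eq hw.2 fun i ω => mul_wProb_agreesOn_past hw.1 (hp i ω)

/-- The least kernel that is monotone in the past and dominates the sequential conditional
probabilities of `w`. -/
noncomputable def monoKernel (w : (ι → Bool) → ℝ) (i : ι) (ω : ι → Bool) : ℝ :=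
  ⨆ ξ : {ξ : ι → Bool // ∀ j < i, ξ j ≤ ω j}, seqKernel w 0 i ξ

theorem seqKernel_le_monoKernel {i : ι} {ξ ω : ι → Bool} (h : ∀ j < i, ξ j ≤ ω j) :
    seqKernel w 0 i ξ ≤ monoKernel w i ω :=
  le_ciSup (f := fun ξ : {ξ : ι → Bool // ∀ j < i, ξ j ≤ ω j} => seqKernel w 0 i ξ)
    (Set.finite_range _).bddAbove ⟨ξ, h⟩

theorem monoKernel_le {i : ι} {ω : ι → Bool} {b : ℝ}
    (h : ∀ ξ : ι → Bool, (∀ j < i, ξ j ≤ ω j) → seqKernel w 0 i ξ ≤ b) : monoKernel w i ω ≤ b :=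
  have : Nonempty {ξ : ι → Bool // ∀ j < i, ξ j ≤ ω j} := ⟨⟨ω, fun _ _ => le_rfl⟩⟩
  ciSup_le fun ξ => h ξ.1 ξ.2

theorem kernelLE_monoKernel (w : (ι → Bool) → ℝ) : KernelLE (monoKernel w) (monoKernel w) :=
  fun _ _ _ h => monoKernel_le fun _ h' =>
    seqKernel_le_monoKernel fun j hj => (h' j hj).trans (h j hj)

theorem isKernel_monoKernel (hw : ∀ ω, 0 ≤ w ω) : IsKernel (monoKernel w) :=
  have hseq : IsKernel (seqKernel w 0) := isKernel_seqKernel hw ⟨le_rfl, zero_le_one⟩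
  { nonneg := fun i ω => (hseq.nonneg i ω).trans (seqKernel_le_monoKernel fun _ _ => le_rfl)
    le_one := fun i _ => monoKernel_le fun ξ _ => hseq.le_one i ξ
    causal := fun i ξ ζ h => le_antisymm
      (kernelLE_monoKernel w i ξ ζ fun j hj => (h j hj).le)
      (kernelLE_monoKernel w i ζ ξ fun j hj => (h j hj).ge) }

theorem IsMonotonic.monoKernel_eq (hm : IsMonotonic w) (hw : ∀ ω, 0 ≤ w ω) {i : ι}
    {ω : ι → Bool} (hω : 0 < wProb w (agreesOn (past i) ω)) :
    monoKernel w i ω = seqKernel w 0 i ω := by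
  refine le_antisymm (monoKernel_le fun ξ h => ?_) (seqKernel_le_monoKernel fun _ _ => le_rfl)
  by_cases hξ : 0 < wProb w (agreesOn (past i) ξ)
  · simpa only [seqKernel, if_pos hξ, if_pos hω] using
      hm i (past i) ξ ω (fun j hj => h j (mem_past.1 hj)) hξ hω
  · rw [seqKernel, if_neg hξ]
    exact (isKernel_seqKernel hw ⟨le_rfl, zero_le_one⟩).nonneg i ω

theorem IsMonotonic.kernelWeight_monoKernel (hm : IsMonotonic w) (hw : IsProbWeight w) :
    kernelWeight (monoKernel w) = w :=
  kernelWeight_eq_of_eq_seqKernel hw fun _ _ => hm.monoKernel_eq hw.1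

theorem seqKernel_condWeight {i : ι} {b : Bool} (hb : 0 < wProb w fun ω => ω i = b) (d : ℝ) (j : ι)
    (ω : ι → Bool) :
    seqKernel (condWeight w i b) d j ω =
      if 0 < wProb w (fun η => η i = b ∧ agreesOn (past j) ω η) then
        wProb w (fun η => η i = b ∧ η j = true ∧ agreesOn (past j) ω η) /
          wProb w (fun η => η i = b ∧ agreesOn (past j) ω η)
      else d := by
  simp only [seqKernel, wProb_condWeight, div_pos_iff_of_pos_right hb,
    div_div_div_cancel_right₀ hb.ne']

theorem IsMonotonic.monoKernel_eq_div (hm : IsMonotonic w) (hw : ∀ ω, 0 ≤ w ω) {i : ι}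
    {ω : ι → Bool} (hω : 0 < wProb w (agreesOn (past i) ω)) :
    monoKernel w i ω =
      wProb w (fun η => η i = true ∧ agreesOn (past i) ω η) / wProb w (agreesOn (past i) ω) := by
  rw [hm.monoKernel_eq hw hω, seqKernel, if_pos hω]

theorem IsMonotonic.forceKernel_true_le (hm : IsMonotonic w) (hw : ∀ ω, 0 ≤ w ω) {i : ι}
    (hi : 0 < wProb w fun ω => ω i = true) :
    KernelLE (forceKernel (monoKernel w) i true) (seqKernel (condWeight w i true) 1) :=
  fun j ξ ζ h => by
    rw [seqKernel_condWeight hi]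
    split_ifs with hζ
    · rcases eq_or_ne j i with rfl | hj
      · simp only [forceKernel_self, if_true, and_self_left, div_self hζ.ne', le_refl]
      · have past_pos : 0 < wProb w (agreesOn (past j) ζ) :=
          hζ.trans_le (wProb_mono hw fun _ h => h.2)
        rw [forceKernel_of_ne _ hj]
        refine (kernelLE_monoKernel w j ξ ζ h).trans ?_
        rw [hm.monoKernel_eq_div hw past_pos, div_le_div_iff₀ past_pos hζ]
        exact hm.wProb_mul_wProb_le hw i j (past j) ζ
    · exact ((isKernel_monoKernel hw).forceKernel i true).le_one j ξ

theorem IsMonotonic.le_forceKernel_false (hm : IsMonotonic w) (hw : ∀ ω, 0 ≤ w ω) {i : ι}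
    (hi : 0 < wProb w fun ω => ω i = false) :
    KernelLE (seqKernel (condWeight w i false) 0) (forceKernel (monoKernel w) i false) :=
  fun j ξ ζ h => by
    rw [seqKernel_condWeight hi]
    split_ifs with hξ
    · rcases eq_or_ne j i with rfl | hj
      · have disjoint : (wProb w fun η => η j = false ∧ η j = true ∧ agreesOn (past j) ξ η) = 0 :=
          Finset.sum_eq_zero fun η _ => by by_cases h : η j = true <;> simp [h]
        simp only [forceKernel_self, disjoint, zero_div, Bool.false_eq_true, if_false, le_refl]
      · have past_pos : 0 < wProb w (agreesOn (past j) ξ) :=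
          hξ.trans_le (wProb_mono hw fun _ h => h.2)
        rw [forceKernel_of_ne _ hj]
        refine le_trans ?_ (kernelLE_monoKernel w j ξ ζ h)
        rw [hm.monoKernel_eq_div hw past_pos, div_le_div_iff₀ hξ past_pos]
        exact hm.wProb_mul_wProb_ge hw i j (past j) ξ
    · exact ((isKernel_monoKernel hw).forceKernel i false).nonneg j ζ

theorem kernelWeight_seqKernel (hw : IsProbWeight w) (d : ℝ) : kernelWeight (seqKernel w d) = w :=
  kernelWeight_eq_of_eq_seqKernel hw fun _ _ _ => rfl

theorem IsMonotonic.kernelInfluence_le_condInfluence (hm : IsMonotonic w) (hw : ∀ ω, 0 ≤ w ω)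
    {f : (ι → Bool) → Bool} (hf : Monotone (boolInd f)) {i : ι}
    (h_true : 0 < wProb w fun ω => ω i = true) (h_false : 0 < wProb w fun ω => ω i = false) :
    kernelInfluence (monoKernel w) (boolInd f) i ≤ condInfluence w f i := by
  have cond_true := isProbWeight_condWeight hw h_true
  have cond_false := isProbWeight_condWeight hw h_false
  have forced := (isKernel_monoKernel hw).forceKernel i
  rw [condInfluence_eq, ← kernelWeight_seqKernel cond_true 1, ← kernelWeight_seqKernel cond_false 0]
  exact sub_le_sub
    (wExp_kernelWeight_mono (forced true) (isKernel_seqKernel cond_true.1 ⟨zero_le_one, le_rfl⟩)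
      (hm.forceKernel_true_le hw h_true) hf)
    (wExp_kernelWeight_mono (isKernel_seqKernel cond_false.1 ⟨le_rfl, zero_le_one⟩) (forced false)
      (hm.le_forceKernel_false hw h_false) hf)

end SequentialKernel

/-! ### The influence inequality -/

section InfluenceInequality

theorem exists_talagrandTerm_le {x : ℝ} (hx : 0 < x) (hx_one : x < 1) :
    ∃ k, talagrandTerm k x ≤ 12 * (x / Real.log (1 / x)) := by
  set L := Real.log (1 / x) with hL
  have L_pos : 0 < L := Real.log_pos (one_lt_one_div hx hx_one)
  have sqrt_eq : √x = Real.exp (-L / 2) := by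
    rw [Real.exp_half, hL, one_div, Real.log_inv, neg_neg, Real.exp_log hx]
  have three_pow_le : (3 : ℝ) ^ ⌊L / 8⌋₊ ≤ Real.exp (L / 4) := by
    calc (3 : ℝ) ^ ⌊L / 8⌋₊ ≤ Real.exp 2 ^ ⌊L / 8⌋₊ := by
          gcongr
          linarith [Real.add_one_le_exp 2]
      _ = Real.exp (⌊L / 8⌋₊ * 2) := (Real.exp_nat_mul 2 _).symm
      _ ≤ Real.exp (L / 4) :=
          Real.exp_le_exp.2 (by linarith [Nat.floor_le (a := L / 8) (by positivity)])
  have exp_neg_le : Real.exp (-(L / 4)) ≤ 4 / L := by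
    rw [Real.exp_neg, ← inv_div L 4]
    gcongr
    linarith [Real.add_one_le_exp (L / 4)]
  have low_le : 3 ^ ⌊L / 8⌋₊ * √x ^ 3 ≤ 4 * (x / L) := by
    calc 3 ^ ⌊L / 8⌋₊ * √x ^ 3 ≤ Real.exp (L / 4) * √x ^ 3 := by gcongr
      _ = x * (Real.exp (L / 4) * √x) := by rw [pow_succ, Real.sq_sqrt hx.le, mul_left_comm]
      _ = x * Real.exp (-(L / 4)) := by
          rw [sqrt_eq, ← Real.exp_add]
          ring_nf
      _ ≤ x * (4 / L) := by gcongr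
      _ = 4 * (x / L) := by ring
  have high_le : x / (⌊L / 8⌋₊ + 1) ≤ 8 * (x / L) := by
    calc x / (⌊L / 8⌋₊ + 1) ≤ x / (L / 8) := by
          gcongr
          exact (Nat.lt_floor_add_one _).le
      _ = 8 * (x / L) := by field_simp
  exact ⟨⌊L / 8⌋₊, by rw [talagrandTerm]; linarith⟩

theorem exists_ofReal_talagrandTerm_le {x : ℝ} (hx : x ≤ 1) :
    ∃ k, ENNReal.ofReal (talagrandTerm k x) ≤
      12 * (ENNReal.ofReal x / ENNReal.ofReal (Real.log (1 / x))) := by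
  rcases hx.eq_or_lt with rfl | hx
  · exact ⟨0, by simp⟩
  rcases le_or_gt x 0 with nonpos | pos
  · refine ⟨0, ?_⟩
    have : talagrandTerm 0 x ≤ talagrandTerm 0 0 := talagrandTerm_monotone 0 nonpos
    rw [ENNReal.ofReal_of_nonpos (this.trans (by simp [talagrandTerm]))]
    exact zero_le
  · obtain ⟨k, hk⟩ := exists_talagrandTerm_le pos hx
    have log_pos : 0 < Real.log (1 / x) := Real.log_pos (one_lt_one_div pos hx)
    refine ⟨k, (ENNReal.ofReal_le_ofReal hk).trans_eq ?_⟩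
    rw [ENNReal.ofReal_mul (by norm_num), ENNReal.ofReal_div_of_pos log_pos, ENNReal.ofReal_ofNat]

variable {ι : Type*}

theorem boolInd_eq_zero_or_one (f : (ι → Bool) → Bool) (ω : ι → Bool) :
    boolInd f ω = 0 ∨ boolInd f ω = 1 := by
  unfold boolInd
  split_ifs <;> simp

theorem IncreasingBoolFun.monotone_boolInd {f : (ι → Bool) → Bool} (hf : IncreasingBoolFun f) :
    Monotone (boolInd f) := fun ω η h => by
  unfold boolInd
  by_cases hω : f ω = true
  · rw [if_pos hω, if_pos (hf ω η h hω)]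
  · rw [if_neg hω]
    positivity

variable [Fintype ι] [DecidableEq ι] {w : (ι → Bool) → ℝ}

theorem wVar_eq_sub (hsum : ∑ ω, w ω = 1) (g : (ι → Bool) → ℝ) :
    wVar w g = wExp w (fun ω => g ω ^ 2) - wExp w g ^ 2 := by
  set m := wExp w g with hm
  calc wVar w g = ∑ ω, (w ω * g ω ^ 2 - 2 * m * (w ω * g ω) + m ^ 2 * w ω) :=
        Finset.sum_congr rfl fun ω _ => by ring
    _ = wExp w (fun ω => g ω ^ 2) - 2 * m * m + m ^ 2 := by
        rw [Finset.sum_add_distrib, Finset.sum_sub_distrib, ← Finset.mul_sum, ← Finset.mul_sum,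
          hsum, mul_one, wExp, hm, wExp]
    _ = wExp w (fun ω => g ω ^ 2) - m ^ 2 := by ring

theorem IsProbWeight.wProb_add_wProb (hw : IsProbWeight w) (i : ι) :
    wProb w (fun ω => ω i = true) + wProb w (fun ω => ω i = false) = 1 := by
  simpa only [and_true, wProb_true, hw.2] using (wProb_eq_add (w := w) i fun _ => True).symm

theorem IsProbWeight.wVar_coordFun (hw : IsProbWeight w) (i : ι) :
    wVar w (coordFun i) = wProb w (fun ω => ω i = true) * wProb w (fun ω => ω i = false) := by
  have mean : wExp w (coordFun i) = wProb w fun ω => ω i = true :=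
    wExp_boolInd w fun ω => ω i
  have sq : (fun ω => coordFun i ω ^ 2) = coordFun i := funext fun ω => by simp [coordFun]
  rw [wVar_eq_sub hw.2, sq, mean, eq_sub_of_add_eq' (hw.wProb_add_wProb i)]
  ring

theorem IsProbWeight.wProb_pos_of_wVar_pos (hw : IsProbWeight w) {i : ι}
    (hi : 0 < wVar w (coordFun i)) (b : Bool) : 0 < wProb w fun ω => ω i = b := by
  rw [hw.wVar_coordFun] at hi
  cases b
  · exact pos_of_mul_pos_right hi (wProb_nonneg hw.1 _)
  · exact pos_of_mul_pos_left hi (wProb_nonneg hw.1 _)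

theorem IsProbWeight.wVar_coordFun_le_one (hw : IsProbWeight w) (i : ι) :
    wVar w (coordFun i) ≤ 1 := by
  have h_true := wProb_nonneg hw.1 fun ω => ω i = true
  have h_false := wProb_nonneg hw.1 fun ω => ω i = false
  have := hw.wProb_add_wProb i
  rw [hw.wVar_coordFun]
  exact mul_le_one₀ (by linarith) h_false (by linarith)

theorem condInfluence_le_one (hw : ∀ ω, 0 ≤ w ω) (f : (ι → Bool) → Bool) (i : ι) :
    condInfluence w f i ≤ 1 := by
  have h_true := div_le_one_of_le₀ (wProb_mono hw fun ω (h : f ω = true ∧ ω i = true) => h.2)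
    (wProb_nonneg hw _)
  have h_false := div_nonneg (wProb_nonneg hw fun ω => f ω = true ∧ ω i = false)
    (wProb_nonneg hw fun ω => ω i = false)
  rw [condInfluence]
  linarith

theorem IsMonotonic.wVar_boolInd_le {ι : Type*} [LinearOrder ι] [Fintype ι] {w : (ι → Bool) → ℝ}
    (hm : IsMonotonic w) (hw : IsProbWeight w) (hvar : ∀ i, 0 < wVar w (coordFun i))
    {f : (ι → Bool) → Bool} (hf : IncreasingBoolFun f) (k : ι → ℕ) :
    wVar w (boolInd f) ≤ (∑ i, talagrandTerm (k i) (condInfluence w f i)) / 2 := by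
  have kernel_bound := wExp_sq_sub_sq_wExp_kernelWeight_le (isKernel_monoKernel hw.1)
    (kernelLE_monoKernel w) (boolInd_eq_zero_or_one f) hf.monotone_boolInd k
  rw [hm.kernelWeight_monoKernel hw, ← wVar_eq_sub hw.2] at kernel_bound
  refine kernel_bound.trans ?_
  gcongr with i
  exact talagrandTerm_monotone (k i) <| hm.kernelInfluence_le_condInfluence hw.1
    hf.monotone_boolInd (hw.wProb_pos_of_wVar_pos (hvar i) true)
    (hw.wProb_pos_of_wVar_pos (hvar i) false)

theorem graham_grimmett_influence_inequality_general (hw : IsProbWeight w) (hm : IsMonotonic w)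
    (hvar : ∀ i, 0 < wVar w (coordFun i)) {f : (ι → Bool) → Bool} (hf : IncreasingBoolFun f) :
    ENNReal.ofReal (wVar w (boolInd f)) ≤
      6 * ∑ i, ENNReal.ofReal (condInfluence w f i) /
        ENNReal.ofReal (Real.log (1 / condInfluence w f i)) := by
  obtain ⟨order⟩ : Nonempty (LinearOrder ι) :=
    ⟨LinearOrder.lift' _ (Fintype.equivFin ι).injective⟩
  obtain rfl : ‹DecidableEq ι› = order.toDecidableEq := Subsingleton.elim _ _
  choose k hk using fun i => exists_ofReal_talagrandTerm_le (condInfluence_le_one hw.1 f i)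
  calc ENNReal.ofReal (wVar w (boolInd f))
      ≤ ENNReal.ofReal ((∑ i, talagrandTerm (k i) (condInfluence w f i)) / 2) :=
        ENNReal.ofReal_le_ofReal (hm.wVar_boolInd_le hw hvar hf k)
    _ = ENNReal.ofReal (∑ i, talagrandTerm (k i) (condInfluence w f i)) / 2 := by
        rw [ENNReal.ofReal_div_of_pos two_pos, ENNReal.ofReal_ofNat]
    _ ≤ (∑ i, ENNReal.ofReal (talagrandTerm (k i) (condInfluence w f i))) / 2 := by
        gcongr
        exact Finset.le_sum_of_subadditive _ ENNReal.ofReal_zero.le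
          (fun _ _ => ENNReal.ofReal_add_le) _ _
    _ ≤ (∑ i, 12 * (ENNReal.ofReal (condInfluence w f i) /
          ENNReal.ofReal (Real.log (1 / condInfluence w f i)))) / 2 := by
        gcongr with i
        exact hk i
    _ = _ := by
        have twelve_div_two : (12 : ENNReal) / 2 = 6 :=
          ((ENNReal.eq_div_iff two_ne_zero ENNReal.ofNat_ne_top).2 (by norm_num)).symm
        rw [← Finset.mul_sum, ENNReal.mul_div_right_comm, twelve_div_two]

end InfluenceInequality

/-- **Graham–Grimmett influence inequality for monotonic measures.**  There is a
universal `c > 0` such that for every `n ≥ 1`, every monotonic probability measure `μ`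
on `{0,1}^n` with `min_i Var_μ(ω_i) > 0`, and every increasing boolean function `f`,
`Var_μ(f) ≤ (c / min_i Var_μ(ω_i)) Σ_i Inf_i^μ[f]/log(1/Inf_i^μ[f])`.
The inequality is stated in `ℝ≥0∞`, where the summand for a coordinate with
`Inf_i^μ[f] = 0` equals `0` (as `0/0 = 0` in `ℝ≥0∞`) and the summand for
`Inf_i^μ[f] = 1` equals `+∞` (as `1/0 = ∞` in `ℝ≥0∞`). -/
theorem graham_grimmett_influence_inequality :
    ∃ c : ℝ, 0 < c ∧ ∀ (n : ℕ), 1 ≤ n → ∀ w : (Fin n → Bool) → ℝ,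
      IsProbWeight w → IsMonotonic w →
      (0 < ⨅ i : Fin n, wVar w (coordFun i)) →
      ∀ f : (Fin n → Bool) → Bool, IncreasingBoolFun f →
      ENNReal.ofReal (wVar w (boolInd f)) ≤
        ENNReal.ofReal (c / ⨅ i : Fin n, wVar w (coordFun i)) *
          ∑ i : Fin n,
            ENNReal.ofReal (condInfluence w f i) /
              ENNReal.ofReal (Real.log (1 / condInfluence w f i)) := by
  refine ⟨6, by norm_num, fun n hn w hw hm hvar f hf => ?_⟩
  have iInf_le : ∀ i, ⨅ i, wVar w (coordFun i) ≤ wVar w (coordFun i) :=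
    ciInf_le (Set.finite_range _).bddBelow
  have iInf_le_one := (iInf_le ⟨0, hn⟩).trans (hw.wVar_coordFun_le_one _)
  refine (graham_grimmett_influence_inequality_general hw hm
    (fun i => hvar.trans_le (iInf_le i)) hf).trans ?_
  gcongr
  rw [← ENNReal.ofReal_ofNat]
  exact ENNReal.ofReal_le_ofReal (le_div_self (by norm_num) hvar iInf_le_one)
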